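/- For every N ≥ 2 there is a constant C_N depending only on N such that: if F(X) = Σ_{i,j=1}^N f_{ij} X_i X_j is a nonsingular isotropic integral quadratic form in N variables, then there exist N linearly independent vectors x_1, …, x_N ∈ ℤ^N with F(x_1) = ⋯ = F(x_N) = 0 and |x_1| · |x_2| ⋯ |x_N| ≤ C_N · |F|^{N²/2 − 1}. -/

import Mathlib

/-- The sup-norm of an integer vector: `max_i |x_i|`. -/
def supNorm {N : ℕ} (x : Fin N → ℤ) : ℕ := Finset.univ.sup fun i => (x i).natAbs

/-!
Let `B` be the symmetric bilinear form of `F`, let `K` bound it, and let `x` be a nonzero integral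
zero of smallest Euclidean norm. For an integral `y` with `B(x, y) ≠ 0` the vector
`B(y, y) x - 2 B(x, y) y`, a multiple of the reflection of `x` along `y`, is another integral zero.
It depends only on `y` modulo `ℝ x`, so its norm is `≪ K ρ² |x|`, where `ρ` is the distance from
`y` to the line `ℝ x`.

Since no zero is shorter than `x`, every nonzero lattice point that projects into the segment
`[-x/2, x/2]` is at distance `≫ K^(-1/2)` from it. Minkowski's theorem, applied to boxes around
the segment which are that thin in `N - 2` directions, then shows that the lattice points at
distance `≤ R ≪ K^((N-2)/2) / |x|` from `ℝ x` span the space; if `|x| ≤ K^((N-2)/2)`, the standard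
basis already does so with `R = 1`. Reflecting `x` along these points and their sums yields,
together with `x`, zeros that span the space, and `|x| (K R² |x|)^(N-1) ≪ K^(N²/2 - 1)`.
-/

open LinearMap (BilinForm)
open Module Submodule MeasureTheory
open scoped InnerProductSpace

section ScaledReflection

variable {R M : Type*} [CommRing R] [AddCommGroup M] [Module R M] {B : BilinForm R M}

/-- `B(y, y)` times the reflection of `x` in the hyperplane orthogonal to `y`. Clearing the
denominator keeps the vector integral when `x`, `y` and `B` are, and makes sense also for
isotropic `y`. -/
def scaledReflection (B : BilinForm R M) (x y : M) : M :=
  B y y • x - (2 * B x y) • y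

theorem apply_self_scaledReflection (hB : B.IsSymm) (x y : M) :
    B (scaledReflection B x y) (scaledReflection B x y) = B y y ^ 2 * B x x := by
  simp only [scaledReflection, map_sub, map_smul, LinearMap.sub_apply, LinearMap.smul_apply,
    smul_eq_mul, hB.eq x y]
  ring

theorem apply_scaledReflection (x y : M) :
    B x (scaledReflection B x y) = B y y * B x x - 2 * B x y ^ 2 := by
  simp only [scaledReflection, map_sub, map_smul, smul_eq_mul]
  ring

theorem scaledReflection_sub_smul (hB : B.IsSymm) {x : M} (hx : B x x = 0) (y : M) (a : R) :
    scaledReflection B x (y - a • x) = scaledReflection B x y := by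
  simp only [scaledReflection, map_sub, map_smul, LinearMap.sub_apply, LinearMap.smul_apply,
    smul_eq_mul, hx, hB.eq x y]
  module

theorem scaledReflection_ne_zero [IsDomain R] [NeZero (2 : R)] {x y : M} (hx : B x x = 0)
    (hxy : B x y ≠ 0) : scaledReflection B x y ≠ 0 := by
  intro h
  have := apply_scaledReflection (B := B) x y
  simp [h, hx, hxy, two_ne_zero] at this

theorem scaledReflection_mem {S : Type*} [Field S] [Algebra R S] [Module S M]
    [IsScalarTower R S M] {B : BilinForm S M} {L : Submodule R M} (hL : L ≤ B.dualSubmodule L)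
    {x y : M} (hx : x ∈ L) (hy : y ∈ L) : scaledReflection B x y ∈ L := by
  obtain ⟨q, hq⟩ := mem_one.1 (hL hy y hy)
  obtain ⟨p, hp⟩ := mem_one.1 (hL hx y hy)
  have : scaledReflection B x y = q • x - (2 * p) • y := by
    rw [scaledReflection, ← hq, ← hp, ← algebraMap_smul S q, ← algebraMap_smul S (2 * p), map_mul,
      map_ofNat]
  exact this ▸ L.sub_mem (L.smul_mem _ hx) (L.smul_mem _ hy)

end ScaledReflection

section LinearAlgebra

variable {K V : Type*} [Field K] [AddCommGroup V] [Module K V]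

theorem mem_of_scaledReflection_mem [NeZero (2 : K)] {B : BilinForm K V} {T : Submodule K V}
    {x y : V} (hx : x ∈ T) (hxy : B x y ≠ 0) (h : scaledReflection B x y ∈ T) : y ∈ T := by
  have hy : (2 * B x y) • y = B y y • x - scaledReflection B x y := by simp [scaledReflection]
  rw [← T.smul_mem_iff (mul_ne_zero two_ne_zero hxy), hy]
  exact T.sub_mem (T.smul_mem _ hx) h

theorem eq_top_of_forall_mem_of_apply_ne_zero {S : Set V} {T : Submodule K V} {φ : Dual K V}
    (hS : span K S = ⊤) (hφ : φ ≠ 0) (hmem : ∀ y ∈ S, φ y ≠ 0 → y ∈ T)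
    (hmem_add : ∀ y ∈ S, ∀ y' ∈ S, φ (y + y') ≠ 0 → y + y' ∈ T) : T = ⊤ := by
  obtain ⟨y₀, hy₀, hφy₀⟩ : ∃ y ∈ S, φ y ≠ 0 := by
    by_contra! hzero
    exact hφ (LinearMap.ext_on hS hzero)
  refine eq_top_iff.2 (hS ▸ span_le.2 fun y hy => ?_)
  by_cases hφy : φ y = 0
  · have : y + y₀ ∈ T := hmem_add y hy y₀ hy₀ (by simpa [hφy] using hφy₀)
    exact (T.add_mem_iff_left (hmem y₀ hy₀ hφy₀)).1 this
  · exact hmem y hy hφy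

theorem exists_basis_of_span_insert_eq_top {ι : Type*} [Fintype ι]
    [FiniteDimensional K V] (hcard : finrank K V = Fintype.card ι) {x : V} {Z : Set V}
    (hx : x ≠ 0) (hZ : span K (insert x Z) = ⊤) :
    ∃ (b : Basis ι K V) (i₀ : ι), b i₀ = x ∧ ∀ i ≠ i₀, b i ∈ Z := by
  obtain ⟨s, hsZ, hxs, hspan, hs⟩ := exists_linearIndepOn_id_extension (K := K)
    (LinearIndepOn.singleton (v := id) hx) (Set.singleton_subset_iff.2 (Set.mem_insert x Z))
  have htop : ⊤ ≤ span K (Set.range ((↑) : s → V)) := by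
    rw [Subtype.range_coe, ← hZ]
    exact span_le.2 hspan
  let b := Basis.mk hs htop
  have : Fintype s := FiniteDimensional.fintypeBasisIndex b
  let e : s ≃ ι := Fintype.equivOfCardEq (by rw [← hcard, finrank_eq_card_basis b])
  have hb (i : ι) : b.reindex e i = e.symm i := by simp [b]
  refine ⟨b.reindex e, e ⟨x, hxs rfl⟩, by simp [hb], fun i hi => ?_⟩
  rw [hb]
  refine (hsZ (e.symm i).2).resolve_left fun h => hi ?_
  rw [← e.symm_apply_eq]
  exact Subtype.ext h

end LinearAlgebra

section Cylinder

variable {E : Type*} [NormedAddCommGroup E] [InnerProductSpace ℝ E]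

/-- The points of `L` at distance at most `R` from the line `ℝ x`. -/
def latticeCylinder (L : Submodule ℤ E) (x : E) (R : ℝ) : Set E :=
  {y | y ∈ L ∧ ∃ a : ℝ, ‖y - a • x‖ ≤ R}

theorem add_mem_latticeCylinder {L : Submodule ℤ E} {x y y' : E} {R R' : ℝ}
    (hy : y ∈ latticeCylinder L x R) (hy' : y' ∈ latticeCylinder L x R') :
    y + y' ∈ latticeCylinder L x (R + R') := by
  obtain ⟨hyL, a, ha⟩ := hy
  obtain ⟨hyL', a', ha'⟩ := hy'
  refine ⟨L.add_mem hyL hyL', a + a', ?_⟩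
  rw [add_smul, add_sub_add_comm]
  exact (norm_add_le _ _).trans (add_le_add ha ha')

theorem norm_sub_inner_smul_le {m : ℕ} (b : OrthonormalBasis (Fin (m + 2)) ℝ E) (y : E) {σ : ℝ}
    (hσ : ∀ i : Fin m, |⟪b i.succ.succ, y⟫_ℝ| ≤ σ) :
    ‖y - ⟪b 0, y⟫_ℝ • b 0‖ ≤ |⟪b 1, y⟫_ℝ| + m * σ := by
  have hy : y - ⟪b 0, y⟫_ℝ • b 0 =
      ⟪b 1, y⟫_ℝ • b 1 + ∑ i : Fin m, ⟪b i.succ.succ, y⟫_ℝ • b i.succ.succ := by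
    have := b.sum_repr' y
    rw [Fin.sum_univ_succ, Fin.sum_univ_succ] at this
    exact sub_eq_iff_eq_add'.2 this.symm
  have hnorm (i) (c : ℝ) : ‖c • b i‖ = |c| := by simp [norm_smul]
  calc ‖y - ⟪b 0, y⟫_ℝ • b 0‖
      ≤ ‖⟪b 1, y⟫_ℝ • b 1‖ + ∑ i : Fin m, ‖⟪b i.succ.succ, y⟫_ℝ • b i.succ.succ‖ := by
        rw [hy]
        exact (norm_add_le _ _).trans (by gcongr; exact norm_sum_le _ _)
    _ ≤ |⟪b 1, y⟫_ℝ| + ∑ _i : Fin m, σ := by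
        simp only [hnorm]
        gcongr with i
        exact hσ i
    _ = |⟪b 1, y⟫_ℝ| + m * σ := by simp

variable [FiniteDimensional ℝ E]

theorem exists_ne_zero_mem_of_covolume_mul_two_pow_lt [MeasurableSpace E] [BorelSpace E]
    (L : Submodule ℤ E) [DiscreteTopology L] [IsZLattice ℝ L] {s : Set E}
    (hsymm : ∀ y ∈ s, -y ∈ s) (hconv : Convex ℝ s)
    (hs : ENNReal.ofReal (ZLattice.covolume L) * 2 ^ finrank ℝ E < volume s) :
    ∃ y ∈ L, y ≠ 0 ∧ y ∈ s := by
  let b := (Free.chooseBasis ℤ L).ofZLatticeBasis ℝ L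
  have hF : IsAddFundamentalDomain L (ZSpan.fundamentalDomain b) :=
    ZLattice.isAddFundamentalDomain _ volume
  have hF_finite : volume (ZSpan.fundamentalDomain b) ≠ ⊤ :=
    (ZSpan.fundamentalDomain_isBounded b).measure_lt_top.ne
  rw [ZLattice.covolume_eq_measure_fundamentalDomain L volume hF, ofReal_measureReal hF_finite]
    at hs
  have : Countable L.toAddSubgroup := inferInstanceAs (Countable L)
  obtain ⟨y, hy, hys⟩ := exists_ne_zero_mem_lattice_of_measure_mul_two_pow_lt_measure
    (L := L.toAddSubgroup) hF hsymm hconv hs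
  exact ⟨y, y.2, by simpa using hy, hys⟩

theorem volume_setOf_forall_abs_inner_le [MeasurableSpace E] [BorelSpace E]
    {ι : Type*} [Fintype ι] (b : OrthonormalBasis ι ℝ E) (a : ι → ℝ) :
    volume {y : E | ∀ i, |⟪b i, y⟫_ℝ| ≤ a i} = ∏ i, ENNReal.ofReal (2 * a i) := by
  have hpre : {y : E | ∀ i, |⟪b i, y⟫_ℝ| ≤ a i} =
      (WithLp.ofLp ∘ b.repr) ⁻¹' Set.univ.pi fun i => Set.Icc (-a i) (a i) := by
    ext y
    simp only [abs_le, Set.mem_ofPred_eq, Set.mem_preimage, Set.mem_univ_pi, Set.mem_Icc,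
      Function.comp_apply, b.repr_apply_apply]
  have hrepr : MeasurePreserving (WithLp.ofLp ∘ b.repr) :=
    (PiLp.volume_preserving_ofLp ι).comp b.measurePreserving_repr
  rw [hpre, hrepr.measure_preimage
    (MeasurableSet.univ_pi fun _ => measurableSet_Icc).nullMeasurableSet, volume_pi_pi]
  simp only [Real.volume_Icc, sub_neg_eq_add, two_mul]

theorem exists_ne_zero_mem_forall_abs_inner_le [MeasurableSpace E] [BorelSpace E]
    {ι : Type*} [Fintype ι] (b : OrthonormalBasis ι ℝ E) (L : Submodule ℤ E)
    [DiscreteTopology L] [IsZLattice ℝ L] {a : ι → ℝ} (ha : ∀ i, 0 ≤ a i)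
    (hL : ZLattice.covolume L < ∏ i, a i) :
    ∃ y ∈ L, y ≠ 0 ∧ ∀ i, |⟪b i, y⟫_ℝ| ≤ a i := by
  refine exists_ne_zero_mem_of_covolume_mul_two_pow_lt L
    (s := {y | ∀ i, |⟪b i, y⟫_ℝ| ≤ a i}) (by simp) ?_ ?_
  · simp only [Set.ofPred_forall, abs_le]
    exact convex_iInter fun i => (convex_Icc _ _).linear_preimage (innerₛₗ ℝ (b i))
  · rw [volume_setOf_forall_abs_inner_le, ← ENNReal.ofReal_prod_of_nonneg fun i _ => by
        linarith [ha i], Finset.prod_mul_distrib, Finset.prod_const, Finset.card_univ,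
      ← finrank_eq_card_basis b.toBasis, mul_comm, ENNReal.ofReal_mul (by positivity),
      ENNReal.ofReal_pow zero_le_two, ENNReal.ofReal_ofNat]
    have hprod : 0 < ∏ i, a i := (ZLattice.covolume_pos L).trans hL
    exact (ENNReal.mul_lt_mul_iff_right (by simp) (by finiteness)).2
      ((ENNReal.ofReal_lt_ofReal_iff hprod).2 hL)

theorem exists_orthonormalBasis_of_mem_of_ne_top {ι : Type*} [Fintype ι]
    (hcard : finrank ℝ E = Fintype.card ι) {i₀ i₁ : ι} (hi : i₀ ≠ i₁) {W : Submodule ℝ E} {x : E}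
    (hx : x ≠ 0) (hxW : x ∈ W) (hW : W ≠ ⊤) :
    ∃ b : OrthonormalBasis ι ℝ E, ‖x‖ • b i₀ = x ∧ ∀ v ∈ W, ⟪b i₁, v⟫_ℝ = 0 := by
  classical
  obtain ⟨u, huW, hu⟩ := (Submodule.ne_bot_iff _).1 (mt orthogonal_eq_bot_iff.1 hW)
  have hux : ⟪u, x⟫_ℝ = 0 := inner_left_of_mem_orthogonal hxW huW
  have hxu : ⟪x, u⟫_ℝ = 0 := inner_right_of_mem_orthogonal hxW huW
  let v : ι → E := fun i => if i = i₀ then ‖x‖⁻¹ • x else ‖u‖⁻¹ • u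
  have hv : Orthonormal ℝ (({i₀, i₁} : Set ι).domRestrict v) := by
    constructor
    · rintro ⟨i, rfl | rfl⟩ <;> simp [v, norm_smul, hx, hu, hi.symm]
    · rintro ⟨i, rfl | rfl⟩ ⟨j, rfl | rfl⟩ hij <;>
        simp_all [v, hi.symm, real_inner_smul_left, real_inner_smul_right]
  obtain ⟨b, hb⟩ := hv.exists_orthonormalBasis_extension_of_card_eq hcard
  refine ⟨b, ?_, fun w hw => ?_⟩
  · simp [hb i₀, v, smul_smul, hx]
  · simp [hb i₁, v, hi.symm, real_inner_smul_left, inner_left_of_mem_orthogonal hw huW]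

-- If the cylinder spans a proper subspace `W`, a Minkowski box may have half-width `R / 2` in a
-- direction orthogonal to `W`: a lattice point of the box has coordinate `0` there if it lies in
-- the cylinder, and forces `R < 2 m σ` otherwise, so it violates `hgap` in both cases.
theorem span_latticeCylinder_eq_top_of_forall_eq_zero [MeasurableSpace E] [BorelSpace E] {m : ℕ}
    (hE : finrank ℝ E = m + 2) {L : Submodule ℤ E} [DiscreteTopology L] [IsZLattice ℝ L]
    {x : E} (hxL : x ∈ L) {σ R : ℝ} (hσ : 0 < σ)
    (hgap : ∀ y ∈ L, ∀ a : ℝ, |a| ≤ 1 / 2 → ‖y - a • x‖ ≤ 2 * (m * σ) → y = 0)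
    (hvol : ZLattice.covolume L < ‖x‖ / 2 * (R / 2) * σ ^ m) :
    span ℝ (latticeCylinder L x R) = ⊤ := by
  have hvol_pos : 0 < ‖x‖ / 2 * (R / 2) * σ ^ m := (ZLattice.covolume_pos L).trans hvol
  have hx : 0 < ‖x‖ := (norm_nonneg x).lt_of_ne fun h => by simp [← h] at hvol_pos
  have hR : 0 < R := by
    by_contra! hR
    refine hvol_pos.not_ge ?_
    have : ‖x‖ / 2 * σ ^ m * R ≤ 0 := mul_nonpos_of_nonneg_of_nonpos (by positivity) hR
    linarith
  by_contra hW
  have hxW : x ∈ span ℝ (latticeCylinder L x R) := subset_span ⟨hxL, 1, by simpa using hR.le⟩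
  obtain ⟨b, hb₀, hb₁⟩ := exists_orthonormalBasis_of_mem_of_ne_top (ι := Fin (m + 2))
    (by simpa using hE) zero_ne_one (norm_pos_iff.1 hx) hxW hW
  obtain ⟨y, hyL, hy, hbox⟩ := exists_ne_zero_mem_forall_abs_inner_le b L
    (a := Fin.cons (‖x‖ / 2) (Fin.cons (R / 2) fun _ => σ))
    (by simp [Fin.forall_fin_succ, (half_pos hx).le, (half_pos hR).le, hσ.le])
    (by simpa [Fin.prod_univ_succ, mul_assoc] using hvol)
  rw [Fin.forall_fin_succ, Fin.forall_fin_succ] at hbox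
  obtain ⟨hbox₀, hbox₁, hbox₂⟩ := hbox
  set a : ℝ := ⟪b 0, y⟫_ℝ / ‖x‖ with ha
  have hax : a • x = ⟪b 0, y⟫_ℝ • b 0 := by
    conv_lhs => rw [← hb₀, smul_smul, div_mul_cancel₀ _ hx.ne']
  have hdist : ‖y - a • x‖ ≤ |⟪b 1, y⟫_ℝ| + m * σ := hax ▸ norm_sub_inner_smul_le b y hbox₂
  have ha_le : |a| ≤ 1 / 2 := by
    rw [ha, abs_div, abs_of_pos hx, div_le_iff₀ hx]
    simpa [mul_comm, div_eq_mul_inv] using hbox₀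
  refine hy (hgap y hyL a ha_le ?_)
  rcases le_or_gt ‖y - a • x‖ R with hnear | hfar
  · have : ⟪b 1, y⟫_ℝ = 0 := hb₁ y (subset_span ⟨hyL, a, hnear⟩)
    rw [this, abs_zero] at hdist
    have : 0 ≤ m * σ := by positivity
    linarith
  · have : |⟪b 1, y⟫_ℝ| ≤ R / 2 := hbox₁
    linarith

end Cylinder

section Zeros

variable {E : Type*} [NormedAddCommGroup E] [InnerProductSpace ℝ E] {B : BilinForm ℝ E} {K : ℝ}
  {L : Submodule ℤ E} {x y : E} {a ρ : ℝ}

theorem nonneg_of_forall_abs_apply_le (hK : ∀ u v, |B u v| ≤ K * ‖u‖ * ‖v‖) (hx : x ≠ 0) :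
    0 ≤ K := by
  have := (abs_nonneg _).trans (hK x x)
  rw [mul_assoc] at this
  exact nonneg_of_mul_nonneg_left this (by positivity)

theorem norm_scaledReflection_le (hB : B.IsSymm) (hK : ∀ u v, |B u v| ≤ K * ‖u‖ * ‖v‖)
    (hx : B x x = 0) (hy : ‖y - a • x‖ ≤ ρ) :
    ‖scaledReflection B x y‖ ≤ 3 * K * ρ ^ 2 * ‖x‖ := by
  rw [← scaledReflection_sub_smul hB hx y a]
  set w := y - a • x
  rcases eq_or_ne x 0 with rfl | hx0
  · simp [scaledReflection]
  have hK0 : 0 ≤ K := nonneg_of_forall_abs_apply_le hK hx0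
  calc ‖scaledReflection B x w‖
      ≤ |B w w| * ‖x‖ + 2 * |B x w| * ‖w‖ := by
        refine (norm_sub_le _ _).trans (le_of_eq ?_)
        simp [norm_smul]
    _ ≤ K * ‖w‖ * ‖w‖ * ‖x‖ + 2 * (K * ‖x‖ * ‖w‖) * ‖w‖ := by
        gcongr <;> exact hK _ _
    _ = 3 * K * ‖w‖ ^ 2 * ‖x‖ := by ring
    _ ≤ 3 * K * ρ ^ 2 * ‖x‖ := by gcongr

/-- `x` is a nonzero isotropic vector of the lattice `L` whose Euclidean norm is smallest. -/
structure IsMinimalZero (B : BilinForm ℝ E) (L : Submodule ℤ E) (x : E) : Prop where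
  mem : x ∈ L
  ne_zero : x ≠ 0
  apply_self : B x x = 0
  norm_le : ∀ z ∈ L, z ≠ 0 → B z z = 0 → ‖x‖ ≤ ‖z‖

theorem exists_isMinimalZero [FiniteDimensional ℝ E] [DiscreteTopology L]
    (h : ∃ x ∈ L, x ≠ 0 ∧ B x x = 0) : ∃ x, IsMinimalZero B L x := by
  obtain ⟨x₀, hx₀L, hx₀, hBx₀⟩ := h
  have : DiscreteTopology L.toAddSubgroup := inferInstanceAs (DiscreteTopology L)
  have hfin : (Metric.closedBall 0 ‖x₀‖ ∩ L : Set E).Finite :=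
    Metric.finite_isBounded_inter_isClosed DiscreteTopology.isDiscrete Metric.isBounded_closedBall
      (AddSubgroup.isClosed_of_discrete (H := L.toAddSubgroup))
  let Z : Set E := {z ∈ Metric.closedBall 0 ‖x₀‖ ∩ L | z ≠ 0 ∧ B z z = 0}
  obtain ⟨x, ⟨⟨hxx₀, hxL⟩, hx, hBx⟩, hmin⟩ := Set.exists_min_image Z norm
    (hfin.subset (Set.sep_subset _ _)) ⟨x₀, ⟨by simp, hx₀L⟩, hx₀, hBx₀⟩
  refine ⟨x, hxL, hx, hBx, fun z hzL hz hBz => ?_⟩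
  rcases le_or_gt ‖z‖ ‖x₀‖ with hzx₀ | hzx₀
  · exact hmin z ⟨⟨by simpa using hzx₀, hzL⟩, hz, hBz⟩
  · exact (mem_closedBall_zero_iff.1 hxx₀).trans hzx₀.le

theorem one_le_abs_of_le_dualSubmodule (hL : L ≤ B.dualSubmodule L) (hx : x ∈ L) (hy : y ∈ L)
    (hxy : B x y ≠ 0) : 1 ≤ |B x y| := by
  obtain ⟨n, hn⟩ := mem_one.1 (hL hx y hy)
  rw [← hn] at hxy ⊢
  have hn0 : n ≠ 0 := by
    rintro rfl
    simp at hxy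
  simpa using (by exact_mod_cast Int.one_le_abs hn0 : (1 : ℝ) ≤ |(n : ℝ)|)

-- Otherwise `y` itself, the nonzero integer `B y y` or the zero `scaledReflection B x y` would be
-- too small.
theorem IsMinimalZero.eq_zero_of_norm_sub_smul_le (hmin : IsMinimalZero B L x) (hB : B.IsSymm)
    (hL : L ≤ B.dualSubmodule L) (hK : ∀ u v, |B u v| ≤ K * ‖u‖ * ‖v‖) (hy : y ∈ L)
    (ha : |a| ≤ 1 / 2) (hdist : ‖y - a • x‖ ≤ ρ) (hρx : 2 * ρ < ‖x‖) (hρ : 3 * K * ρ ^ 2 < 1) :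
    y = 0 := by
  by_contra hy0
  have hx_pos : 0 < ‖x‖ := norm_pos_iff.2 hmin.ne_zero
  by_cases hyy : B y y = 0
  · have hy_le : ‖y‖ ≤ ρ + 1 / 2 * ‖x‖ := calc
      ‖y‖ ≤ ‖y - a • x‖ + ‖a • x‖ := norm_le_norm_sub_add y (a • x)
      _ ≤ ρ + 1 / 2 * ‖x‖ := by
        rw [norm_smul, Real.norm_eq_abs]
        gcongr
    linarith [hmin.norm_le y hy hy0 hyy]
  by_cases hxy : B x y = 0
  · have hw : B y y = B (y - a • x) (y - a • x) := by
      simp [hmin.apply_self, hxy, hB.eq y x]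
    have hK0 : 0 ≤ K := nonneg_of_forall_abs_apply_le hK hy0
    refine (one_le_abs_of_le_dualSubmodule hL hy hy hyy).not_gt ?_
    calc |B y y| ≤ K * ‖y - a • x‖ ^ 2 := by
          rw [hw, sq, ← mul_assoc]
          exact hK _ _
      _ ≤ 3 * K * ρ ^ 2 := by
          gcongr
          linarith
      _ < 1 := hρ
  · have hz := hmin.norm_le _ (scaledReflection_mem hL hmin.mem hy)
      (scaledReflection_ne_zero hmin.apply_self hxy)
      (by rw [apply_self_scaledReflection hB, hmin.apply_self, mul_zero])
    have hz_le := norm_scaledReflection_le hB hK hmin.apply_self hdist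
    exact (hz.trans hz_le).not_gt (mul_lt_of_lt_one_left hx_pos hρ)

theorem IsMinimalZero.span_latticeCylinder_eq_top [FiniteDimensional ℝ E] [MeasurableSpace E]
    [BorelSpace E] [DiscreteTopology L] [IsZLattice ℝ L] {m : ℕ} (hE : finrank ℝ E = m + 2)
    (hmin : IsMinimalZero B L x) (hB : B.IsSymm) (hL : L ≤ B.dualSubmodule L)
    (hK : ∀ u v, |B u v| ≤ K * ‖u‖ * ‖v‖) (hK1 : 1 ≤ K) (hx : 1 ≤ ‖x‖) {R : ℝ}
    (hvol : 4 * (8 * (m + 1) * √K) ^ m * ZLattice.covolume L < R * ‖x‖) :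
    span ℝ (latticeCylinder L x R) = ⊤ := by
  have hK_sqrt : 1 ≤ √K := Real.one_le_sqrt.2 hK1
  set σ : ℝ := (8 * (m + 1) * √K)⁻¹ with hσ
  have hσ_pos : 0 < σ := by positivity
  have hgap : 2 * (m * σ) * √K ≤ 1 / 4 := by
    rw [hσ]
    field_simp
    linarith
  refine span_latticeCylinder_eq_top_of_forall_eq_zero hE hmin.mem hσ_pos (fun y hy a ha hdist =>
    hmin.eq_zero_of_norm_sub_smul_le hB hL hK hy ha hdist ?_ ?_) ?_
  · have : 2 * (m * σ) ≤ 2 * (m * σ) * √K := le_mul_of_one_le_right (by positivity) hK_sqrt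
    linarith
  · calc 3 * K * (2 * (m * σ)) ^ 2 = 3 * (2 * (m * σ) * √K) ^ 2 := by
          rw [mul_pow _ √K, Real.sq_sqrt (by linarith)]
          ring
      _ ≤ 3 * (1 / 4) ^ 2 := by gcongr
      _ < 1 := by norm_num
  · rw [hσ, inv_pow, ← div_eq_mul_inv, lt_div_iff₀ (by positivity)]
    linarith

theorem span_insert_zeros_eq_top (hB : B.IsSymm) (hL : L ≤ B.dualSubmodule L)
    (hK : ∀ u v, |B u v| ≤ K * ‖u‖ * ‖v‖) (hxL : x ∈ L) (hxx : B x x = 0) (hBx : B x ≠ 0)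
    {R : ℝ} (hR : 0 ≤ R) (hspan : span ℝ (latticeCylinder L x R) = ⊤) :
    span ℝ (insert x {z | z ∈ L ∧ B z z = 0 ∧ ‖z‖ ≤ 12 * K * R ^ 2 * ‖x‖}) = ⊤ := by
  set Z : Set E := {z | z ∈ L ∧ B z z = 0 ∧ ‖z‖ ≤ 12 * K * R ^ 2 * ‖x‖}
  have hmem : ∀ y ∈ latticeCylinder L x (2 * R), B x y ≠ 0 → y ∈ span ℝ (insert x Z) := by
    rintro y ⟨hyL, a, ha⟩ hxy
    refine mem_of_scaledReflection_mem (subset_span (Set.mem_insert x Z)) hxy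
      (subset_span (Set.mem_insert_of_mem x ⟨scaledReflection_mem hL hxL hyL, ?_, ?_⟩))
    · rw [apply_self_scaledReflection hB, hxx, mul_zero]
    · exact (norm_scaledReflection_le hB hK hxx ha).trans_eq (by ring)
  refine eq_top_of_forall_mem_of_apply_ne_zero hspan hBx (fun y hy hxy => ?_)
    fun y hy y' hy' hxy => ?_
  · obtain ⟨hyL, a, ha⟩ := hy
    exact hmem y ⟨hyL, a, ha.trans (by linarith)⟩ hxy
  · exact hmem _ (two_mul R ▸ add_mem_latticeCylinder hy hy') hxy

theorem exists_basis_isotropic_prod_norm_le [FiniteDimensional ℝ E] {ι : Type*} [Fintype ι]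
    (hcard : finrank ℝ E = Fintype.card ι) (hB : B.IsSymm) (hL : L ≤ B.dualSubmodule L)
    (hK : ∀ u v, |B u v| ≤ K * ‖u‖ * ‖v‖) (hxL : x ∈ L) (hxx : B x x = 0) (hBx : B x ≠ 0)
    {R : ℝ} (hR : 0 ≤ R) (hspan : span ℝ (latticeCylinder L x R) = ⊤) :
    ∃ b : Basis ι ℝ E, (∀ i, b i ∈ L ∧ B (b i) (b i) = 0) ∧
      ∏ i, ‖b i‖ ≤ ‖x‖ * (12 * K * R ^ 2 * ‖x‖) ^ (Fintype.card ι - 1) := by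
  classical
  have hx : x ≠ 0 := by
    rintro rfl
    simp at hBx
  obtain ⟨b, i₀, hi₀, hb⟩ := exists_basis_of_span_insert_eq_top hcard hx
    (span_insert_zeros_eq_top hB hL hK hxL hxx hBx hR hspan)
  refine ⟨b, fun i => ?_, ?_⟩
  · rcases eq_or_ne i i₀ with rfl | hi
    · exact hi₀ ▸ ⟨hxL, hxx⟩
    · exact ⟨(hb i hi).1, (hb i hi).2.1⟩
  · rw [← Finset.mul_prod_erase _ _ (Finset.mem_univ i₀), hi₀, ← Finset.card_univ,
      ← Finset.card_erase_of_mem (Finset.mem_univ i₀), ← Finset.prod_const]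
    gcongr with i hi
    exact (hb i (Finset.ne_of_mem_erase hi)).2.2

end Zeros

section IntLattice

variable {ι : Type*} [Fintype ι]

/-- The lattice `ℤ^ι` in Euclidean space. -/
abbrev intLattice (ι : Type*) [Fintype ι] : Submodule ℤ (EuclideanSpace ℝ ι) :=
  span ℤ (Set.range (EuclideanSpace.basisFun ι ℝ).toBasis)

/-- The inclusion of `ℤ^ι` into Euclidean space. -/
def euclideanOfInt (ι : Type*) [Fintype ι] : (ι → ℤ) →ₗ[ℤ] EuclideanSpace ℝ ι where
  toFun z := WithLp.toLp 2 fun i => (z i : ℝ)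
  map_add' z w := by ext i; simp
  map_smul' n z := by ext i; simp

@[simp]
theorem euclideanOfInt_apply (z : ι → ℤ) (i : ι) : euclideanOfInt ι z i = z i := rfl

theorem euclideanOfInt_injective : Function.Injective (euclideanOfInt ι) := fun z w h =>
  funext fun i => by simpa using congr_arg (fun v : EuclideanSpace ℝ ι => v i) h

theorem mem_intLattice_iff {y : EuclideanSpace ℝ ι} :
    y ∈ intLattice ι ↔ ∃ z, euclideanOfInt ι z = y := by
  rw [Basis.mem_span_iff_repr_mem]
  constructor
  · intro hy
    choose z hz using hy
    exact ⟨z, by ext i; simpa using hz i⟩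
  · rintro ⟨z, rfl⟩ i
    exact ⟨z i, by simp⟩

theorem covolume_intLattice : ZLattice.covolume (intLattice ι) = 1 := by
  rw [ZLattice.covolume_eq_measure_fundamentalDomain _ volume
    (ZSpan.isAddFundamentalDomain (EuclideanSpace.basisFun ι ℝ).toBasis volume),
    measureReal_congr (ZSpan.fundamentalDomain_ae_parallelepiped _ volume), measureReal_def,
    OrthonormalBasis.coe_toBasis, OrthonormalBasis.volume_parallelepiped, ENNReal.toReal_one]

theorem one_le_norm_of_mem_intLattice {y : EuclideanSpace ℝ ι} (hy : y ∈ intLattice ι)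
    (hy0 : y ≠ 0) : 1 ≤ ‖y‖ := by
  obtain ⟨z, rfl⟩ := mem_intLattice_iff.1 hy
  obtain ⟨i, hi⟩ := Function.ne_iff.1 ((map_ne_zero_iff _ euclideanOfInt_injective).1 hy0)
  calc (1 : ℝ) ≤ |(z i : ℝ)| := by exact_mod_cast Int.one_le_abs hi
    _ ≤ ‖euclideanOfInt ι z‖ := PiLp.norm_apply_le (euclideanOfInt ι z) i

theorem span_latticeCylinder_intLattice_eq_top (x : EuclideanSpace ℝ ι) {R : ℝ} (hR : 1 ≤ R) :
    span ℝ (latticeCylinder (intLattice ι) x R) = ⊤ := by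
  rw [eq_top_iff, ← (EuclideanSpace.basisFun ι ℝ).toBasis.span_eq]
  refine span_mono ?_
  rintro _ ⟨i, rfl⟩
  exact ⟨subset_span ⟨i, rfl⟩, 0, by simpa using hR⟩

theorem supNorm_le_norm_euclideanOfInt {N : ℕ} (z : Fin N → ℤ) :
    (supNorm z : ℝ) ≤ ‖euclideanOfInt (Fin N) z‖ := by
  rw [← Nat.le_floor_iff (norm_nonneg _)]
  refine Finset.sup_le fun i _ => Nat.le_floor ?_
  rw [Nat.cast_natAbs, Int.cast_abs]
  exact PiLp.norm_apply_le (euclideanOfInt (Fin N) z) i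

theorem exists_linearIndependent_int_of_forall_mem {κ : Type*}
    {b : κ → EuclideanSpace ℝ ι} (hb : LinearIndependent ℝ b) (hmem : ∀ k, b k ∈ intLattice ι) :
    ∃ z : κ → ι → ℤ, LinearIndependent ℤ z ∧ ∀ k, euclideanOfInt ι (z k) = b k := by
  choose z hz using fun k => mem_intLattice_iff.1 (hmem k)
  refine ⟨z, LinearIndependent.of_comp (euclideanOfInt ι) ?_, hz⟩
  rw [show euclideanOfInt ι ∘ z = b from funext hz]
  exact hb.restrict_scalars fun n n' h => by simpa using h

end IntLattice

section EuclideanForm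

variable {ι : Type*} [Fintype ι] [DecidableEq ι] {f : Matrix ι ι ℤ}

/-- The bilinear form on Euclidean space with integral Gram matrix `f`. -/
noncomputable def euclideanForm (f : Matrix ι ι ℤ) : BilinForm ℝ (EuclideanSpace ℝ ι) :=
  Matrix.toBilin (EuclideanSpace.basisFun ι ℝ).toBasis (f.map Int.cast)

theorem euclideanForm_apply (u v : EuclideanSpace ℝ ι) :
    euclideanForm f u v = ∑ i, ∑ j, u i * f i j * v j := by
  simp [euclideanForm, Matrix.toBilin_apply]

theorem euclideanForm_euclideanOfInt (z w : ι → ℤ) :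
    euclideanForm f (euclideanOfInt ι z) (euclideanOfInt ι w) =
      (∑ i, ∑ j, f i j * z i * w j : ℤ) := by
  simp [euclideanForm_apply, mul_comm (z _ : ℝ)]

theorem isSymm_euclideanForm (hf : f.IsSymm) : (euclideanForm f).IsSymm :=
  (Matrix.isSymm_toBilin_iff_isSymm _).2 (hf.map _)

theorem nondegenerate_euclideanForm (hf : f.det ≠ 0) : (euclideanForm f).Nondegenerate := by
  have hdet : (f.map (Int.cast : ℤ → ℝ)).det = (f.det : ℝ) := (Int.castRingHom ℝ).map_det f |>.symm
  exact (Matrix.nondegenerate_toBilin_iff _).2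
    (Matrix.nondegenerate_of_det_ne_zero (by simpa [hdet] using hf))

theorem intLattice_le_dualSubmodule_euclideanForm (f : Matrix ι ι ℤ) :
    intLattice ι ≤ (euclideanForm f).dualSubmodule (intLattice ι) := by
  intro x hx y hy
  obtain ⟨z, rfl⟩ := mem_intLattice_iff.1 hx
  obtain ⟨w, rfl⟩ := mem_intLattice_iff.1 hy
  exact mem_one.2 ⟨_, (euclideanForm_euclideanOfInt z w).symm⟩

theorem abs_euclideanForm_le {H : ℝ} (hH : ∀ i j, |(f i j : ℝ)| ≤ H)
    (u v : EuclideanSpace ℝ ι) :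
    |euclideanForm f u v| ≤ Fintype.card ι ^ 2 * H * ‖u‖ * ‖v‖ := by
  rw [euclideanForm_apply]
  calc |∑ i, ∑ j, u i * f i j * v j|
      ≤ ∑ i, ∑ j, |u i * f i j * v j| := by
        refine (Finset.abs_sum_le_sum_abs _ _).trans ?_
        gcongr
        exact Finset.abs_sum_le_sum_abs _ _
    _ ≤ ∑ _i : ι, ∑ _j : ι, ‖u‖ * H * ‖v‖ := by
        gcongr with i _ j _
        have hH0 : 0 ≤ H := (abs_nonneg _).trans (hH i j)
        rw [abs_mul, abs_mul]
        gcongr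
        · exact PiLp.norm_apply_le u i
        · exact hH i j
        · exact PiLp.norm_apply_le v j
    _ = Fintype.card ι ^ 2 * H * ‖u‖ * ‖v‖ := by
        simp only [Finset.sum_const, Finset.card_univ, nsmul_eq_mul]
        ring

end EuclideanForm

section Height

variable {ι : Type*} [Fintype ι] {f : Matrix ι ι ℤ}

/-- The largest absolute value of an entry of `f`, written `|F|` for the quadratic form `F` with
Gram matrix `f`. -/
def matrixHeight (f : Matrix ι ι ℤ) : ℕ := Finset.univ.sup fun p : ι × ι => (f p.1 p.2).natAbs

theorem abs_le_matrixHeight (f : Matrix ι ι ℤ) (i j : ι) : |(f i j : ℝ)| ≤ matrixHeight f := by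
  rw [← Int.cast_abs, ← Nat.cast_natAbs, Nat.cast_le]
  exact Finset.le_sup (f := fun p : ι × ι => (f p.1 p.2).natAbs) (Finset.mem_univ (i, j))

theorem one_le_matrixHeight (hf : f ≠ 0) : 1 ≤ matrixHeight f := by
  refine Nat.one_le_iff_ne_zero.2 fun h => hf (Matrix.ext fun i j => ?_)
  simpa [h] using abs_le_matrixHeight f i j

end Height

section ProductBound

/-- The constant in the radius `cylinderConst m * √K ^ m / ‖x‖` at which Minkowski's theorem makes
the cylinder around a minimal zero `x` of `ℤ^(m + 2)` span. -/
def cylinderConst (m : ℕ) : ℝ := 8 * (8 * (m + 1)) ^ m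

theorem one_le_cylinderConst (m : ℕ) : 1 ≤ cylinderConst m := by
  have : (1 : ℝ) ≤ (8 * (m + 1)) ^ m := one_le_pow₀ (by linarith [m.cast_nonneg (α := ℝ)])
  rw [cylinderConst]
  linarith

variable {m : ℕ} {B : BilinForm ℝ (EuclideanSpace ℝ (Fin (m + 2)))} {K : ℝ}

theorem IsMinimalZero.exists_span_latticeCylinder_eq_top {x : EuclideanSpace ℝ (Fin (m + 2))}
    (hmin : IsMinimalZero B (intLattice (Fin (m + 2))) x) (hB : B.IsSymm)
    (hL : intLattice (Fin (m + 2)) ≤ B.dualSubmodule (intLattice (Fin (m + 2))))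
    (hK : ∀ u v, |B u v| ≤ K * ‖u‖ * ‖v‖) (hK1 : 1 ≤ K) :
    ∃ R, 0 ≤ R ∧ R ≤ cylinderConst m ∧ R * ‖x‖ ≤ cylinderConst m * √K ^ m ∧
      span ℝ (latticeCylinder (intLattice (Fin (m + 2))) x R) = ⊤ := by
  have hC : 1 ≤ cylinderConst m := one_le_cylinderConst m
  have hx : 1 ≤ ‖x‖ := one_le_norm_of_mem_intLattice hmin.mem hmin.ne_zero
  rcases le_or_gt ‖x‖ (√K ^ m) with hshort | hlong
  · refine ⟨1, zero_le_one, hC, ?_, span_latticeCylinder_intLattice_eq_top x le_rfl⟩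
    gcongr
  · have hR : cylinderConst m * √K ^ m / ‖x‖ * ‖x‖ = cylinderConst m * √K ^ m :=
      div_mul_cancel₀ _ (by positivity)
    refine ⟨cylinderConst m * √K ^ m / ‖x‖, by positivity, ?_, hR.le, ?_⟩
    · rw [div_le_iff₀ (by positivity)]
      gcongr
    · refine hmin.span_latticeCylinder_eq_top finrank_euclideanSpace_fin hB hL hK hK1 hx ?_
      rw [hR, covolume_intLattice, mul_one, cylinderConst, mul_pow]
      have : 0 < (8 * (m + 1 : ℝ)) ^ m * √K ^ m := by positivity
      linarith

theorem mul_pow_le_of_mul_le {r R C h : ℝ} (hr : 0 ≤ r) (hR : 0 ≤ R) (hh : 0 ≤ h) (hRC : R ≤ C)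
    (hRr : R * r ≤ C * h ^ m) :
    r * (12 * h ^ 2 * R ^ 2 * r) ^ (m + 1) ≤
      (12 * C ^ 2) ^ (m + 1) * h ^ (m ^ 2 + 4 * m + 2) := by
  have hC : 0 ≤ C := hR.trans hRC
  calc r * (12 * h ^ 2 * R ^ 2 * r) ^ (m + 1)
      = (12 * h ^ 2) ^ (m + 1) * (R * r) ^ (m + 2) * R ^ m := by ring
    _ ≤ (12 * h ^ 2) ^ (m + 1) * (C * h ^ m) ^ (m + 2) * C ^ m := by gcongr
    _ = (12 * C ^ 2) ^ (m + 1) * h ^ (m ^ 2 + 4 * m + 2) := by ring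

theorem sqrt_pow_eq_rpow (hK : 0 ≤ K) (m : ℕ) :
    √K ^ (m ^ 2 + 4 * m + 2) = K ^ (((m + 2 : ℕ) : ℝ) ^ 2 / 2 - 1) := by
  rw [Real.sqrt_eq_rpow, ← Real.rpow_natCast, ← Real.rpow_mul hK]
  congr 1
  push_cast
  ring

theorem exists_basis_isotropic_intLattice_prod_norm_le (hB : B.IsSymm) (hnd : B.Nondegenerate)
    (hL : intLattice (Fin (m + 2)) ≤ B.dualSubmodule (intLattice (Fin (m + 2))))
    (hK : ∀ u v, |B u v| ≤ K * ‖u‖ * ‖v‖) (hK1 : 1 ≤ K)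
    (hiso : ∃ x ∈ intLattice (Fin (m + 2)), x ≠ 0 ∧ B x x = 0) :
    ∃ b : Basis (Fin (m + 2)) ℝ (EuclideanSpace ℝ (Fin (m + 2))),
      (∀ k, b k ∈ intLattice (Fin (m + 2)) ∧ B (b k) (b k) = 0) ∧
      ∏ k, ‖b k‖ ≤
        (12 * cylinderConst m ^ 2) ^ (m + 1) * K ^ (((m + 2 : ℕ) : ℝ) ^ 2 / 2 - 1) := by
  obtain ⟨x, hmin⟩ := exists_isMinimalZero hiso
  obtain ⟨R, hR, hRC, hRx, hspan⟩ := hmin.exists_span_latticeCylinder_eq_top hB hL hK hK1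
  have hBx : B x ≠ 0 := fun h => hmin.ne_zero (hnd.1 x (by simp [h]))
  obtain ⟨b, hb, hprod⟩ := exists_basis_isotropic_prod_norm_le (ι := Fin (m + 2)) (by simp) hB hL
    hK hmin.mem hmin.apply_self hBx hR hspan
  refine ⟨b, hb, hprod.trans ?_⟩
  rw [← sqrt_pow_eq_rpow (by linarith), Fintype.card_fin]
  simpa [Real.sq_sqrt (zero_le_one.trans hK1)] using
    mul_pow_le_of_mul_le (norm_nonneg x) hR (Real.sqrt_nonneg K) hRC hRx

theorem exists_basis_isotropic_euclideanForm_prod_norm_le {f : Matrix (Fin (m + 2)) (Fin (m + 2)) ℤ}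
    (hf : f.IsSymm) (hdet : f.det ≠ 0)
    (hiso : ∃ x : Fin (m + 2) → ℤ, x ≠ 0 ∧ ∑ i, ∑ j, f i j * x i * x j = 0) :
    ∃ b : Basis (Fin (m + 2)) ℝ (EuclideanSpace ℝ (Fin (m + 2))),
      (∀ k, b k ∈ intLattice (Fin (m + 2)) ∧ euclideanForm f (b k) (b k) = 0) ∧
      ∏ k, ‖b k‖ ≤ (12 * cylinderConst m ^ 2) ^ (m + 1) *
        (((m + 2 : ℕ) : ℝ) ^ 2 * matrixHeight f) ^ (((m + 2 : ℕ) : ℝ) ^ 2 / 2 - 1) := by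
  obtain ⟨x, hx, hfx⟩ := hiso
  have hheight : 1 ≤ matrixHeight f := one_le_matrixHeight (by rintro rfl; simp at hdet)
  refine exists_basis_isotropic_intLattice_prod_norm_le (isSymm_euclideanForm hf)
    (nondegenerate_euclideanForm hdet) (intLattice_le_dualSubmodule_euclideanForm f)
    (by simpa using abs_euclideanForm_le (abs_le_matrixHeight f)) ?_
    ⟨euclideanOfInt _ x, mem_intLattice_iff.2 ⟨x, rfl⟩,
      (map_ne_zero_iff _ euclideanOfInt_injective).2 hx, ?_⟩
  · exact_mod_cast one_le_mul (one_le_pow₀ (by omega)) hheight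
  · rw [euclideanForm_euclideanOfInt, hfx, Int.cast_zero]

end ProductBound

/-- **Schulze-Pillot.** For every `N ≥ 2` there is a constant `C_N` such that every nonsingular
isotropic integral quadratic form `F` in `N` variables admits `N` linearly independent integral
zeros `x_1, …, x_N` with `|x_1| ⋯ |x_N| ≤ C_N · |F|^(N²/2 − 1)`. -/
theorem schulze_pillot (N : ℕ) (hN : 2 ≤ N) :
    ∃ C : ℝ, 0 < C ∧
      ∀ (f : Fin N → Fin N → ℤ), (∀ i j, f i j = f j i) →
      (Matrix.of f).det ≠ 0 →
      (∃ x : Fin N → ℤ, x ≠ 0 ∧ ∑ i, ∑ j, f i j * x i * x j = 0) →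
      ∃ x : Fin N → (Fin N → ℤ), LinearIndependent ℤ x ∧
        (∀ k, ∑ i, ∑ j, f i j * x k i * x k j = 0) ∧
        (∏ k, (supNorm (x k) : ℝ)) ≤
          C * ((Finset.univ.sup fun p : Fin N × Fin N => (f p.1 p.2).natAbs : ℕ) : ℝ) ^
            ((N : ℝ) ^ 2 / 2 - 1) := by
  obtain ⟨m, rfl⟩ := Nat.exists_eq_add_of_le' hN
  have hC : 0 < cylinderConst m := zero_lt_one.trans_le (one_le_cylinderConst m)
  refine ⟨(12 * cylinderConst m ^ 2) ^ (m + 1) *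
    (((m + 2 : ℕ) : ℝ) ^ 2) ^ (((m + 2 : ℕ) : ℝ) ^ 2 / 2 - 1), by positivity, ?_⟩
  intro f hsymm hdet hiso
  obtain ⟨b, hb, hprod⟩ := exists_basis_isotropic_euclideanForm_prod_norm_le (f := Matrix.of f)
    (Matrix.IsSymm.ext fun i j => hsymm j i) hdet hiso
  obtain ⟨z, hz, hzb⟩ := exists_linearIndependent_int_of_forall_mem b.linearIndependent
    fun k => (hb k).1
  refine ⟨z, hz, fun k => ?_, ?_⟩
  · have := (hb k).2
    rw [← hzb, euclideanForm_euclideanOfInt] at this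
    exact_mod_cast this
  · calc ∏ k, (supNorm (z k) : ℝ) ≤ ∏ k, ‖b k‖ := by
          gcongr with k
          exact hzb k ▸ supNorm_le_norm_euclideanOfInt (z k)
      _ ≤ _ := hprod
      _ = _ := by
        rw [Real.mul_rpow (by positivity) (by positivity), ← mul_assoc]
        rfl
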